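/- The map ∫ from the Hall algebra H(kΓ) of a finite quiver Γ over a finite field k to the q-twisted polynomial ring, sending the class [M] of a representation M to x^{dim M}/#Aut(M), is an algebra homomorphism, where the twisted product satisfies x^α ∘ x^β = (#k)^{-⟨α,β⟩} x^{α+β} and ⟨·,·⟩ is the Euler–Ringel form of Γ. -/

import Mathlib

/-! STATEMENT 14: the integration map `∫ : H(kΓ) → ℚ^tw[x_i | i ∈ I]`,
`[M] ↦ x^{dim M}/#Aut M`, from the Hall algebra of a finite quiver Γ over a finite field k
to the q-twisted polynomial ring (with `x^α ∘ x^β = (#k)^{-⟨α,β⟩} x^{α+β}`), is an algebra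
homomorphism.  Since `∫` is defined ℚ-linearly on the basis of isomorphism classes, this is
equivalent to multiplicativity on basis elements: for all representations M, N,
`∑_{[X] : dim X = dim M + dim N} g^X_{M,N} / #Aut X = (#k)^{-⟨dim M, dim N⟩} / (#Aut M · #Aut N)`,
where `g^X_{M,N}` counts subrepresentations U ⊆ X with U ≅ N and X/U ≅ M, and the sum runs
over the isomorphism classes of representations of dimension vector `dim M + dim N`. -/

variable (I A : Type) (src tgt : A → I) (k : Type) [Field k]

/-- A finite-dimensional representation of the quiver with vertices I, arrows A. -/
structure QRep where
  V : I → Type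
  [acg : ∀ i, AddCommGroup (V i)]
  [mod : ∀ i, Module k (V i)]
  [fd : ∀ i, FiniteDimensional k (V i)]
  f : ∀ a : A, V (src a) →ₗ[k] V (tgt a)

attribute [instance] QRep.acg QRep.mod QRep.fd

namespace QRep

variable {I A src tgt k}

/-- The dimension vector of a representation. -/
noncomputable def dimVec (M : QRep I A src tgt k) : I → ℕ :=
  fun i => Module.finrank k (M.V i)

/-- Isomorphisms of representations. -/
def Isos (M N : QRep I A src tgt k) : Type :=
  {φ : ∀ i, M.V i ≃ₗ[k] N.V i //
    ∀ (a : A) (x : M.V (src a)), φ (tgt a) (M.f a x) = N.f a (φ (src a) x)}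

/-- Two representations are isomorphic if there is an isomorphism between them. -/
def IsIso (M N : QRep I A src tgt k) : Prop := Nonempty (Isos M N)

/-- The number of automorphisms of a representation. -/
noncomputable def autCard (M : QRep I A src tgt k) : ℕ := Nat.card (Isos M M)

/-- A subrepresentation: a family of submodules preserved by all the arrow maps. -/
structure Sub (X : QRep I A src tgt k) where
  U : ∀ i, Submodule k (X.V i)
  hU : ∀ a : A, U (src a) ≤ (U (tgt a)).comap (X.f a)

/-- A subrepresentation as a representation. -/
noncomputable def Sub.toRep {X : QRep I A src tgt k} (U : Sub X) : QRep I A src tgt k where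
  V i := U.U i
  f a := (X.f a).restrict (fun x hx => Submodule.mem_comap.mp (U.hU a hx))

/-- The quotient representation by a subrepresentation. -/
noncomputable def Sub.quotRep {X : QRep I A src tgt k} (U : Sub X) : QRep I A src tgt k where
  V i := X.V i ⧸ U.U i
  f a := Submodule.mapQ (U.U (src a)) (U.U (tgt a)) (X.f a) (U.hU a)

/-- The Hall number `g^X_{M,N}`: the number of subrepresentations U ⊆ X with U ≅ N
and X/U ≅ M. -/
noncomputable def hallNum (M N X : QRep I A src tgt k) : ℕ :=
  Nat.card {U : Sub X // IsIso U.toRep N ∧ IsIso U.quotRep M}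

end QRep

/-- The Euler–Ringel form `⟨α,β⟩ = ∑_i α_i β_i - ∑_{a : i→j} α_i β_j` of the quiver. -/
def ringelForm [Fintype I] [Fintype A] (α β : I → ℕ) : ℤ :=
  (∑ i : I, (α i : ℤ) * (β i : ℤ)) - ∑ a : A, (α (src a) : ℤ) * (β (tgt a) : ℤ)

/-! A representation on the spaces `N.V i × M.V i` for which `0 → N → · → M → 0` is exact amounts
to an arbitrary off-diagonal family `e : ∀ a, M.V (src a) →ₗ[k] N.V (tgt a)`; call it `E_e`. For
a fixed `X`, count the pairs of such an `e` and an isomorphism from `E_e` to `X` in two ways.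
Directly, there are `#{e | E_e ≅ X} · #Aut X` of them. On the other hand, such a pair is the same as
a short exact sequence `0 → N → X → M → 0` together with a linear splitting at each vertex, and
there are `g^X_{M,N} · #Aut M · #Aut N` sequences, each with `∏ i, #Hom(M.V i, N.V i)` splittings.
Comparing the counts gives Riedtmann's formula; summing over `X` replaces `#{e | E_e ≅ X}` by the
number of all `e`, and `#{e} / ∏ i, #Hom(M.V i, N.V i) = #k ^ (-⟨dim M, dim N⟩)`. -/

section Counting

theorem card_sigma_eq_card_nonempty_mul {α S : Type*} {T : α → Type*}
    (h : ∀ a, T a → Nonempty (T a ≃ S)) :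
    Nat.card (Σ a, T a) = Nat.card {a // Nonempty (T a)} * Nat.card S := by
  rw [← Nat.card_prod]
  exact Nat.card_congr <|
    (Equiv.sigmaSubtypeEquivOfSubset T (fun a => Nonempty (T a)) fun _ t => ⟨t⟩).symm.trans <|
      (Equiv.sigmaCongrRight fun (a : {a // Nonempty (T a)}) => (h a.1 a.2.some).some).trans
        (Equiv.sigmaEquivProd _ _)

theorem finsum_card_fiber {R E C : Type*} [AddCommMonoidWithOne R] [Finite E] (p : E → C) :
    ∑ᶠ c, (Nat.card {e // p e = c} : R) = Nat.card E := by
  classical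
  have := Fintype.ofFinite E
  rw [finsum_eq_sum_of_support_subset (s := Finset.univ.image p)]
  · simp_rw [Nat.card_eq_fintype_card, Fintype.card_subtype, ← Nat.cast_sum]
    rw [← Finset.card_eq_sum_card_image, Finset.card_univ]
  · intro c hc
    have hcard : Nat.card {e // p e = c} ≠ 0 := fun h => hc (by simp only [h, Nat.cast_zero])
    obtain ⟨⟨e, rfl⟩⟩ := (Nat.card_ne_zero.1 hcard).1
    exact Finset.mem_coe.2 (Finset.mem_image_of_mem p (Finset.mem_univ e))

theorem finsum_card_rel_out {R E α : Type*} [AddCommMonoidWithOne R] [Finite E]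
    {r : α → α → Prop} (hr : Equivalence r) (F : E → α) :
    ∑ᶠ c : Quot r, (Nat.card {e // r (F e) c.out} : R) = Nat.card E := by
  have hfiber (e : E) (c : Quot r) : r (F e) c.out ↔ Quot.mk r (F e) = c := by
    rw [← hr.quot_mk_eq_iff, Quot.out_eq]
  simp_rw [hfiber]
  exact finsum_card_fiber _

end Counting

section LinearAlgebra

/-- The sections of the surjection in a split exact sequence form a torsor under `P →ₗ[R] M`,
trivialised by the choice of one section `s`. -/
def sectionsEquiv {R M N P : Type*} [Ring R] [AddCommGroup M] [AddCommGroup N]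
    [AddCommGroup P] [Module R M] [Module R N] [Module R P] {f : M →ₗ[R] N} {g : N →ₗ[R] P}
    (hfg : Function.Exact f g) {r : N →ₗ[R] M} (hr : r ∘ₗ f = .id) {s : P →ₗ[R] N}
    (hs : g ∘ₗ s = .id) : {l : P →ₗ[R] N // g ∘ₗ l = .id} ≃ (P →ₗ[R] M) where
  toFun l := r ∘ₗ (l.1 - s)
  invFun h := ⟨s + f ∘ₗ h, by
    rw [LinearMap.comp_add, hs, ← LinearMap.comp_assoc, hfg.linearMap_comp_eq_zero,
      LinearMap.zero_comp, add_zero]⟩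
  left_inv l := Subtype.ext <| LinearMap.ext fun p => by
    obtain ⟨m, hm⟩ := (hfg ((l.1 - s) p)).1 <| by
      rw [← LinearMap.comp_apply, LinearMap.comp_sub, l.2, hs, sub_self, LinearMap.zero_apply]
    have hrm : r (f m) = m := LinearMap.congr_fun hr m
    change s p + f (r ((l.1 - s) p)) = l.1 p
    rw [← hm, hrm, hm, LinearMap.sub_apply, add_sub_cancel]
  right_inv h := by
    change r ∘ₗ (s + f ∘ₗ h - s) = h
    rw [add_sub_cancel_left, ← LinearMap.comp_assoc, hr, LinearMap.id_comp]

variable {K ι : Type*} [Field K] (V W : ι → Type*)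
  [∀ i, AddCommGroup (V i)] [∀ i, Module K (V i)] [∀ i, FiniteDimensional K (V i)]
  [∀ i, AddCommGroup (W i)] [∀ i, Module K (W i)] [∀ i, FiniteDimensional K (W i)]

theorem finite_pi_linearMap [Finite K] [Finite ι] : Finite (∀ i, V i →ₗ[K] W i) :=
  have (i : ι) : Finite (V i →ₗ[K] W i) := Module.finite_of_finite K
  inferInstance

theorem card_pi_linearMap [Fintype ι] :
    Nat.card (∀ i, V i →ₗ[K] W i) =
      Nat.card K ^ ∑ i, Module.finrank K (V i) * Module.finrank K (W i) := by
  rw [Nat.card_pi, ← Finset.prod_pow_eq_pow_sum]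
  refine Finset.prod_congr rfl fun i _ => ?_
  rw [Module.natCard_eq_pow_finrank (K := K), Module.finrank_linearMap]

end LinearAlgebra

namespace QRep

variable {I A src tgt k}

section Isomorphisms

variable {L L' M M' N : QRep I A src tgt k}

/-- The identity isomorphism. -/
def Isos.refl (M : QRep I A src tgt k) : Isos M M :=
  ⟨fun i => LinearEquiv.refl k (M.V i), fun _ _ => rfl⟩

/-- The inverse isomorphism. -/
def Isos.symm (φ : Isos M N) : Isos N M :=
  ⟨fun i => (φ.1 i).symm, fun a x => by
    rw [LinearEquiv.symm_apply_eq, φ.2, LinearEquiv.apply_symm_apply]⟩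

/-- The composite `ψ ∘ φ` of isomorphisms, in diagrammatic order. -/
def Isos.trans (φ : Isos L M) (ψ : Isos M N) : Isos L N :=
  ⟨fun i => (φ.1 i).trans (ψ.1 i), fun a x => by
    simp only [LinearEquiv.trans_apply, φ.2, ψ.2]⟩

theorem Isos.ext {φ ψ : Isos M N} (h : ∀ i x, φ.1 i x = ψ.1 i x) : φ = ψ :=
  Subtype.ext (funext fun i => LinearEquiv.ext (h i))

/-- Transport of isomorphisms along isomorphisms of source and target. -/
def Isos.congr (φ : Isos L L') (ψ : Isos M M') : Isos L M ≃ Isos L' M' where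
  toFun χ := φ.symm.trans (χ.trans ψ)
  invFun χ := φ.trans (χ.trans ψ.symm)
  left_inv χ := Isos.ext fun i x => by simp [Isos.trans, Isos.symm]
  right_inv χ := Isos.ext fun i x => by simp [Isos.trans, Isos.symm]

theorem isIso_equivalence :
    Equivalence (IsIso : QRep I A src tgt k → QRep I A src tgt k → Prop) :=
  ⟨fun M => ⟨Isos.refl M⟩, fun ⟨φ⟩ => ⟨φ.symm⟩, fun ⟨φ⟩ ⟨ψ⟩ => ⟨φ.trans ψ⟩⟩

theorem autCard_ne_zero [Finite I] [Finite k] (M : QRep I A src tgt k) : autCard M ≠ 0 := by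
  have (i : I) : Finite (M.V i) := Module.finite_of_finite k
  have : Finite (Isos M M) := Finite.of_injective (fun φ i x => φ.1 i x)
    fun φ ψ h => Isos.ext fun i x => congrFun (congrFun h i) x
  exact Nat.card_ne_zero.2 ⟨⟨Isos.refl M⟩, this⟩

theorem card_sigma_isos {E : Type*} (F : E → QRep I A src tgt k) (X : QRep I A src tgt k) :
    Nat.card (Σ e, Isos (F e) X) = Nat.card {e // IsIso (F e) X} * autCard X :=
  card_sigma_eq_card_nonempty_mul fun _ φ => ⟨φ.congr (Isos.refl X)⟩

end Isomorphisms

/-- Short exact sequences `0 → N → X → M → 0` of representations. -/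
@[ext]
structure ShortExact (M N X : QRep I A src tgt k) where
  ι : ∀ i, N.V i →ₗ[k] X.V i
  π : ∀ i, X.V i →ₗ[k] M.V i
  ι_comm : ∀ (a : A) (n : N.V (src a)), ι (tgt a) (N.f a n) = X.f a (ι (src a) n)
  π_comm : ∀ (a : A) (x : X.V (src a)), π (tgt a) (X.f a x) = M.f a (π (src a) x)
  ι_injective : ∀ i, Function.Injective (ι i)
  π_surjective : ∀ i, Function.Surjective (π i)
  exact : ∀ i, Function.Exact (ι i) (π i)

section ShortExactSequences

variable {M M' N N' X X' : QRep I A src tgt k}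

/-- Transport of a short exact sequence along isomorphisms of its three terms. -/
def ShortExact.congr (s : ShortExact M N X) (β : Isos M M') (α : Isos N N') (ξ : Isos X X') :
    ShortExact M' N' X' where
  ι i := (ξ.1 i).toLinearMap ∘ₗ s.ι i ∘ₗ (α.1 i).symm.toLinearMap
  π i := (β.1 i).toLinearMap ∘ₗ s.π i ∘ₗ (ξ.1 i).symm.toLinearMap
  ι_comm a n := by
    have hα : (α.1 (tgt a)).symm (N'.f a n) = N.f a ((α.1 (src a)).symm n) := α.symm.2 a n
    simp only [LinearMap.comp_apply, LinearEquiv.coe_coe, hα, s.ι_comm, ξ.2]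
  π_comm a x := by
    have hξ : (ξ.1 (tgt a)).symm (X'.f a x) = X.f a ((ξ.1 (src a)).symm x) := ξ.symm.2 a x
    simp only [LinearMap.comp_apply, LinearEquiv.coe_coe, hξ, s.π_comm, β.2]
  ι_injective i := (ξ.1 i).injective.comp ((s.ι_injective i).comp (α.1 i).symm.injective)
  π_surjective i := (β.1 i).surjective.comp ((s.π_surjective i).comp (ξ.1 i).symm.surjective)
  exact i := LinearEquiv.postcomp_exact_iff_exact.2 <|
    (LinearEquiv.conj_exact_iff_exact _ _ (ξ.1 i)).2 <|
      LinearEquiv.precomp_exact_iff_exact.2 (s.exact i)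

theorem Sub.ext {U U' : Sub X} (h : ∀ i, U.U i = U'.U i) : U = U' := by
  obtain ⟨U, _⟩ := U
  obtain ⟨U', _⟩ := U'
  obtain rfl : U = U' := funext h
  rfl

/-- The short exact sequence `0 → U → X → X/U → 0`. -/
noncomputable def Sub.shortExact (U : Sub X) : ShortExact U.quotRep U.toRep X where
  ι i := (U.U i).subtype
  π i := (U.U i).mkQ
  ι_comm _ _ := rfl
  π_comm _ _ := rfl
  ι_injective i := (U.U i).subtype_injective
  π_surjective i := (U.U i).mkQ_surjective
  exact i := LinearMap.exact_subtype_mkQ (U.U i)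

/-- The image of `N` in the middle term of a short exact sequence. -/
def ShortExact.image (s : ShortExact M N X) : Sub X where
  U i := LinearMap.range (s.ι i)
  hU a := by
    rintro _ ⟨n, rfl⟩
    exact ⟨N.f a n, s.ι_comm a n⟩

/-- The identification of the image of `N` with `N`. -/
noncomputable def ShortExact.imageIso (s : ShortExact M N X) : Isos s.image.toRep N :=
  Isos.symm ⟨fun i => LinearEquiv.ofInjective (s.ι i) (s.ι_injective i),
    fun a n => Subtype.ext (s.ι_comm a n)⟩

/-- The identification of the cokernel of `N → X` with `M`. -/
noncomputable def ShortExact.quotIso (s : ShortExact M N X) : Isos s.image.quotRep M :=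
  ⟨fun i => (s.exact i).linearEquivOfSurjective (s.π_surjective i), fun a x => by
    induction x using Submodule.Quotient.induction_on with
    | H x => exact s.π_comm a x⟩

/-- The short exact sequence of a subrepresentation identified with `N` and having its quotient
identified with `M`. -/
noncomputable def Sub.toShortExact (U : Sub X) (α : Isos U.toRep N) (β : Isos U.quotRep M) :
    ShortExact M N X :=
  U.shortExact.congr β α (Isos.refl X)

theorem Sub.image_toShortExact (U : Sub X) (α : Isos U.toRep N) (β : Isos U.quotRep M) :
    (U.toShortExact α β).image = U :=
  Sub.ext fun i =>
    (LinearEquiv.range_comp (α.1 i).symm (U.shortExact.ι i)).trans (U.U i).range_subtype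

theorem Sub.toShortExact_bijective :
    Function.Bijective fun t : (Σ U : Sub X, Isos U.toRep N × Isos U.quotRep M) =>
      t.1.toShortExact t.2.1 t.2.2 := by
  constructor
  · rintro ⟨U, α, β⟩ ⟨U', α', β'⟩ h
    have h : U.toShortExact α β = U'.toShortExact α' β' := h
    obtain rfl : U = U' := by
      rw [← U.image_toShortExact α β, h, Sub.image_toShortExact]
    have hα : α.symm = α'.symm := Isos.ext fun i n =>
      Subtype.ext (LinearMap.congr_fun (congrFun (congrArg ShortExact.ι h) i) n)
    have hβ : β = β' := Isos.ext fun i x => by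
      obtain ⟨x, rfl⟩ := Submodule.mkQ_surjective (U.U i) x
      exact LinearMap.congr_fun (congrFun (congrArg ShortExact.π h) i) x
    obtain rfl : α = α' := congrArg Isos.symm hα
    rw [hβ]
  · intro s
    exact ⟨⟨s.image, s.imageIso, s.quotIso⟩, rfl⟩

theorem card_shortExact (M N X : QRep I A src tgt k) :
    Nat.card (ShortExact M N X) = hallNum M N X * (autCard M * autCard N) := by
  rw [← Nat.card_congr (Equiv.ofBijective _ Sub.toShortExact_bijective),
    card_sigma_eq_card_nonempty_mul (S := Isos N N × Isos M M) fun U t =>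
      ⟨(t.1.congr (Isos.refl N)).prodCongr (t.2.congr (Isos.refl M))⟩, Nat.card_prod,
    mul_comm (Nat.card (Isos N N))]
  simp only [nonempty_prod]
  rfl

end ShortExactSequences

section Extensions

/-- The vertex term `⨁ i, Hom(M.V i, N.V i)` of the two-term complex computing `Hom(M, N)` and
`Ext¹(M, N)`. -/
abbrev VertexMaps (M N : QRep I A src tgt k) : Type := ∀ i, M.V i →ₗ[k] N.V i

/-- The arrow term `⨁ (a : i → j), Hom(M.V i, N.V j)` of the two-term complex computing
`Hom(M, N)` and `Ext¹(M, N)`. -/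
abbrev ArrowMaps (M N : QRep I A src tgt k) : Type := ∀ a, M.V (src a) →ₗ[k] N.V (tgt a)

theorem card_arrowMaps_div_card_vertexMaps [Fintype I] [Fintype A] [Fintype k]
    (M N : QRep I A src tgt k) :
    (Nat.card (ArrowMaps M N) : ℚ) / Nat.card (VertexMaps M N) =
      (Fintype.card k : ℚ) ^ (-(ringelForm I A src tgt M.dimVec N.dimVec)) := by
  rw [card_pi_linearMap, card_pi_linearMap, Nat.card_eq_fintype_card, ringelForm, neg_sub,
    zpow_sub₀ (Nat.cast_ne_zero.2 Fintype.card_ne_zero)]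
  norm_cast

variable {M N X : QRep I A src tgt k}

/-- The extension of `M` by `N` on the spaces `N.V i × M.V i` with off-diagonal part `e`. -/
def extRep (e : ArrowMaps M N) : QRep I A src tgt k where
  V i := N.V i × M.V i
  f a := ((N.f a).coprod (e a)).prod (M.f a ∘ₗ LinearMap.snd k _ _)

theorem dimVec_extRep (e : ArrowMaps M N) :
    (extRep e).dimVec = fun i => M.dimVec i + N.dimVec i :=
  funext fun i => (Module.finrank_prod (R := k) (M := N.V i) (M' := M.V i)).trans (add_comm _ _)

/-- The short exact sequence `0 → N → E → M → 0` of the extension `E` with off-diagonal part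
`e`. -/
def extShortExact (e : ArrowMaps M N) : ShortExact M N (extRep e) where
  ι i := LinearMap.inl k (N.V i) (M.V i)
  π i := LinearMap.snd k (N.V i) (M.V i)
  ι_comm a n := Prod.ext
    (show N.f a n = N.f a n + e a 0 by rw [map_zero, add_zero]) (map_zero (M.f a)).symm
  π_comm _ _ := rfl
  ι_injective _ := LinearMap.inl_injective
  π_surjective _ := LinearMap.snd_surjective
  exact _ := Function.Exact.inl_snd

/-- A splitting of a short exact sequence as vector spaces at each vertex, encoded as an
identification of the middle term with the direct sum (as in
`Function.Exact.splitSurjectiveEquiv`). -/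
abbrev ShortExact.Splitting (s : ShortExact M N X) : Type :=
  ∀ i, {e : X.V i ≃ₗ[k] N.V i × M.V i //
    s.ι i = e.symm.toLinearMap ∘ₗ LinearMap.inl k (N.V i) (M.V i) ∧
      s.π i = LinearMap.snd k (N.V i) (M.V i) ∘ₗ e.toLinearMap}

/-- The splittings of a short exact sequence form a torsor under `VertexMaps M N`, trivialised by
choosing one of them. -/
noncomputable def ShortExact.splittingEquiv (s : ShortExact M N X) :
    s.Splitting ≃ VertexMaps M N :=
  Equiv.piCongrRight fun i =>
    have hretraction := (s.ι i).exists_leftInverse_of_injective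
      (LinearMap.ker_eq_bot.2 (s.ι_injective i))
    have hsection := (s.π i).exists_rightInverse_of_surjective
      (LinearMap.range_eq_top.2 (s.π_surjective i))
    ((s.exact i).splitSurjectiveEquiv (s.ι_injective i)).symm.trans
      (sectionsEquiv (s.exact i) hretraction.choose_spec hsection.choose_spec)

namespace ShortExact.Splitting

variable {s : ShortExact M N X} (σ : s.Splitting)

/-- The off-diagonal part of the middle term with respect to a splitting. -/
def arrowMaps : ArrowMaps M N := fun a =>
  LinearMap.fst k _ _ ∘ₗ (σ (tgt a)).1.toLinearMap ∘ₗ X.f a ∘ₗ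
    (σ (src a)).1.symm.toLinearMap ∘ₗ LinearMap.inr k _ _

theorem apply_ι (i : I) (n : N.V i) : (σ i).1 (s.ι i n) = (n, 0) := by
  rw [← LinearEquiv.eq_symm_apply]
  exact LinearMap.congr_fun (σ i).2.1 n

theorem symm_inl (i : I) (n : N.V i) : (σ i).1.symm (n, 0) = s.ι i n :=
  (LinearMap.congr_fun (σ i).2.1 n).symm

theorem snd_apply (i : I) (x : X.V i) : ((σ i).1 x).2 = s.π i x :=
  (LinearMap.congr_fun (σ i).2.2 x).symm

theorem π_symm (i : I) (p : N.V i × M.V i) : s.π i ((σ i).1.symm p) = p.2 := by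
  rw [← σ.snd_apply, LinearEquiv.apply_symm_apply]

/-- The isomorphism of the middle term with a model extension given by a splitting. -/
def iso : Isos (extRep σ.arrowMaps) X :=
  ⟨fun i => (σ i).1.symm, by
    rintro a ⟨n, m⟩
    have hn : (σ (tgt a)).1 (X.f a ((σ (src a)).1.symm (n, 0))) = (N.f a n, 0) := by
      rw [σ.symm_inl, ← s.ι_comm, σ.apply_ι]
    have hm : (σ (tgt a)).1 (X.f a ((σ (src a)).1.symm (0, m))) = (σ.arrowMaps a m, M.f a m) :=
      Prod.ext rfl (by rw [σ.snd_apply, s.π_comm, σ.π_symm])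
    refine (σ (tgt a)).1.symm_apply_eq.2 ?_
    calc
      (N.f a n + σ.arrowMaps a m, M.f a m) = (N.f a n, 0) + (σ.arrowMaps a m, M.f a m) := by
        rw [Prod.mk_add_mk, zero_add]
      _ = (σ (tgt a)).1 (X.f a ((σ (src a)).1.symm ((n, 0) + (0, m)))) := by
        simp only [map_add, hn, hm]
      _ = (σ (tgt a)).1 (X.f a ((σ (src a)).1.symm (n, m))) := by
        rw [Prod.mk_add_mk, add_zero, zero_add]⟩

end ShortExact.Splitting

theorem ShortExact.sigma_splitting_ext {p q : Σ s : ShortExact M N X, s.Splitting}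
    (h : ∀ i, (p.2 i).1 = (q.2 i).1) : p = q := by
  obtain ⟨s, σ⟩ := p
  obtain ⟨s', τ⟩ := q
  obtain rfl : s = s' := ShortExact.ext
    (funext fun i => by rw [(σ i).2.1, (τ i).2.1, h])
    (funext fun i => by rw [(σ i).2.2, (τ i).2.2, h])
  obtain rfl : σ = τ := funext fun i => Subtype.ext (h i)
  rfl

theorem sigma_isos_extRep_ext {p q : Σ e : ArrowMaps M N, Isos (extRep e) X}
    (h : ∀ i (y : N.V i × M.V i), p.2.1 i y = q.2.1 i y) : p = q := by
  obtain ⟨e, φ⟩ := p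
  obtain ⟨e', φ'⟩ := q
  obtain rfl : e = e' := by
    funext a
    ext m
    have hf : (extRep e).f a (0, m) = (extRep e').f a (0, m) :=
      (φ'.1 (tgt a)).injective <| (h _ _).symm.trans <| (φ.2 a (0, m)).trans <|
        (congrArg (X.f a) (h _ _)).trans (φ'.2 a (0, m)).symm
    exact add_left_cancel (congrArg Prod.fst hf)
  obtain rfl : φ = φ' := Isos.ext h
  rfl

/-- Vertexwise split short exact sequences with middle term `X` are the same as isomorphisms from
a model extension to `X`. -/
def ShortExact.sigmaSplittingEquiv (M N X : QRep I A src tgt k) :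
    (Σ s : ShortExact M N X, s.Splitting) ≃ Σ e : ArrowMaps M N, Isos (extRep e) X where
  toFun p := ⟨p.2.arrowMaps, p.2.iso⟩
  invFun p := ⟨(extShortExact p.1).congr (Isos.refl M) (Isos.refl N) p.2,
    fun i => ⟨(p.2.1 i).symm, rfl, rfl⟩⟩
  left_inv _ := ShortExact.sigma_splitting_ext fun _ => rfl
  right_inv _ := sigma_isos_extRep_ext fun _ _ => rfl

end Extensions

/-- Since the complex `VertexMaps M N → ArrowMaps M N` has kernel `Hom(M, N)` and cokernel
`Ext¹(M, N)`, dividing by the number of vertex maps gives the usual form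
`g^X_{M,N} = #Ext¹(M, N)_X / #Hom(M, N) · #Aut X / (#Aut M · #Aut N)`. -/
theorem riedtmann_formula (M N X : QRep I A src tgt k) :
    hallNum M N X * (autCard M * autCard N) * Nat.card (VertexMaps M N) =
      Nat.card {e : ArrowMaps M N // IsIso (extRep e) X} * autCard X := by
  rw [← card_shortExact, ← card_sigma_isos, ← Nat.card_prod]
  exact Nat.card_congr <| (Equiv.sigmaEquivProd _ _).symm.trans <|
    (Equiv.sigmaCongrRight fun s => s.splittingEquiv.symm).trans
      (ShortExact.sigmaSplittingEquiv M N X)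

theorem hallNum_div_autCard [Finite I] [Finite k] (M N X : QRep I A src tgt k) :
    (hallNum M N X : ℚ) / autCard X =
      Nat.card {e : ArrowMaps M N // IsIso (extRep e) X} *
        (Nat.card (VertexMaps M N) * (autCard M * autCard N) : ℚ)⁻¹ := by
  have := finite_pi_linearMap (K := k) M.V N.V
  have hV : Nat.card (VertexMaps M N) ≠ 0 := Nat.card_pos.ne'
  have hM := autCard_ne_zero M
  have hN := autCard_ne_zero N
  have hX := autCard_ne_zero X
  rw [← div_eq_mul_inv, div_eq_div_iff (by positivity) (by positivity)]
  have h := riedtmann_formula M N X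
  norm_cast
  linarith

end QRep

open QRep in
/-- multiplicativity of the integration map `[M] ↦ x^{dim M}/#Aut M` from the
Hall algebra to the twisted polynomial ring with `x^α ∘ x^β = (#k)^{-⟨α,β⟩} x^{α+β}`:
comparing the coefficients of `x^{dim M + dim N}` in `∫([M]·[N]) = ∫[M] ∘ ∫[N]` gives the
stated identity, where the sum runs over the isomorphism classes of representations of
dimension vector `dim M + dim N`. -/
theorem integral_is_algebra_hom [Fintype I] [Fintype A] [Fintype k]
    (M N : QRep I A src tgt k) :
    ∑ᶠ c : Quot (fun X Y : {X : QRep I A src tgt k //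
          X.dimVec = fun i => M.dimVec i + N.dimVec i} => IsIso X.1 Y.1),
        (hallNum M N (Quot.out c).1 : ℚ) / (autCard (Quot.out c).1 : ℚ)
      = (Fintype.card k : ℚ) ^ (-(ringelForm I A src tgt (dimVec M) (dimVec N))) /
          ((autCard M : ℚ) * (autCard N : ℚ)) := by
  have := finite_pi_linearMap (K := k) (fun a => M.V (src a)) (fun a => N.V (tgt a))
  calc
    _ = ∑ᶠ c, (Nat.card {e : ArrowMaps M N // IsIso (extRep e) (Quot.out c).1} : ℚ) *
          (Nat.card (VertexMaps M N) * (autCard M * autCard N) : ℚ)⁻¹ :=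
      finsum_congr fun c => hallNum_div_autCard M N (Quot.out c).1
    _ = Nat.card (ArrowMaps M N) * (Nat.card (VertexMaps M N) * (autCard M * autCard N) : ℚ)⁻¹ := by
      rw [← finsum_mul]
      congr 1
      exact finsum_card_rel_out (isIso_equivalence.comap Subtype.val)
        fun e : ArrowMaps M N => ⟨extRep e, dimVec_extRep e⟩
    _ = _ := by
      rw [← card_arrowMaps_div_card_vertexMaps, ← div_eq_mul_inv, div_div]
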